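/- Let A = B + C be a skew left brace with a factorization through left ideals B and C, which are trivial as skew left braces. If B is a strong left ideal of A, then A is right nilpotent of class at most four, i.e., A^(4) = 0. -/

import Mathlib

/-- A skew left brace: `(A,+)` and `(A,∘)` are groups (sharing the same identity `0`)
such that `a ∘ (b + c) = a ∘ b - a + a ∘ c`.  Here `circ` is the operation `∘` and
`cinv a` is the inverse of `a` in `(A,∘)`. -/
class SkewBrace (A : Type*) extends AddGroup A where
  circ : A → A → A
  cinv : A → A
  circ_assoc : ∀ a b c : A, circ (circ a b) c = circ a (circ b c)
  zero_circ : ∀ a : A, circ 0 a = a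
  circ_zero : ∀ a : A, circ a 0 = a
  cinv_circ : ∀ a : A, circ (cinv a) a = 0
  circ_cinv : ∀ a : A, circ a (cinv a) = 0
  compat : ∀ a b c : A, circ a (b + c) = circ a b + -a + circ a c

open SkewBrace

/-- `lam a b = -a + a ∘ b`. -/
def lam {A : Type*} [SkewBrace A] (a b : A) : A := -a + circ a b

/-- The star operation `a * b = lam a b - b = -a + a ∘ b - b`. -/
def bstar {A : Type*} [SkewBrace A] (a b : A) : A := lam a b - b

/-- `X * Y`: the subgroup of `(A,+)` generated by `{x * y : x ∈ X, y ∈ Y}`. -/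
def starSpan {A : Type*} [SkewBrace A] (X Y : Set A) : AddSubgroup A :=
  AddSubgroup.closure {z | ∃ x ∈ X, ∃ y ∈ Y, z = bstar x y}

/-- The right series of `st`: `rseriesOf st 0 = A = A^(1)` and
`rseriesOf st n = A^(n+1)`, so that `A^(n+1) = A^(n) * A`. -/
def rseriesOf {G : Type*} [AddGroup G] (st : G → G → G) : ℕ → AddSubgroup G
  | 0 => ⊤
  | n + 1 => AddSubgroup.closure {z | ∃ u ∈ rseriesOf st n, ∃ a : G, z = st u a}

section helpers

variable {A : Type*} [SkewBrace A]

theorem circ_eq (a b : A) : circ a b = a + lam a b := by simp [lam]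

theorem lam_add (a b c : A) : lam a (b + c) = lam a b + lam a c := by
  simp [lam, compat, add_assoc]

theorem lam_zero (a : A) : lam a 0 = 0 := by simp [lam, circ_zero]

theorem lam_neg (a b : A) : lam a (-b) = - lam a b := by
  apply eq_neg_of_add_eq_zero_left
  rw [← lam_add]; simp [lam_zero]

theorem lam_circ (a b c : A) : lam (circ a b) c = lam a (lam b c) := by
  have h1 : circ a b + lam (circ a b) c = circ a b + lam a (lam b c) := by
    rw [← circ_eq, circ_assoc, circ_eq b c, circ_eq a (b + lam b c), lam_add, ← add_assoc,
      ← circ_eq]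
  exact add_left_cancel h1

theorem lam_id (c : A) : lam 0 c = c := by simp [lam, zero_circ]

theorem lam_cinv (a c : A) : lam a (lam (cinv a) c) = c := by
  rw [← lam_circ, circ_cinv, lam_id]

theorem add_eq_circ (a b : A) : a + b = circ a (lam (cinv a) b) := by
  rw [circ_eq, lam_cinv]

end helpers

/-- if `A = B + C` is a factorization through left ideals which are trivial
as skew braces, and `B` is moreover a strong left ideal (normal in `(A,+)`), then `A` is
right nilpotent of class at most four: `A^(4) = 0` (here `rseriesOf bstar 3 = A^(4)`). -/
theorem stmt12 {A : Type*} [SkewBrace A] (B C : AddSubgroup A)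
    (hB : ∀ a : A, ∀ x ∈ B, lam a x ∈ B)
    (hC : ∀ a : A, ∀ x ∈ C, lam a x ∈ C)
    (hBn : B.Normal)
    (hBtriv : ∀ x ∈ B, ∀ y ∈ B, x + y = circ x y)
    (hCtriv : ∀ x ∈ C, ∀ y ∈ C, x + y = circ x y)
    (hfact : ∀ a : A, ∃ b ∈ B, ∃ c ∈ C, a = b + c) :
    rseriesOf (bstar (A := A)) 3 = ⊥ := by
  have tB : ∀ x ∈ B, ∀ y ∈ B, lam x y = y := fun x hx y hy => by
    simp [lam, ← hBtriv x hx y hy]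
  have tC : ∀ x ∈ C, ∀ y ∈ C, lam x y = y := fun x hx y hy => by
    simp [lam, ← hCtriv x hx y hy]
  have key : ∀ b ∈ B, ∀ c ∈ C, ∀ y ∈ B, lam (lam b c) y = lam c y := by
    intro b hb c hc y hy
    have e : circ b c = circ (lam b c) (lam (cinv (lam b c)) (-(lam b c) + b + lam b c)) := by
      rw [← add_eq_circ, circ_eq]; simp [add_assoc]
    have hm : -(lam b c) + b + lam b c ∈ B := by
      simpa using hBn.conj_mem b hb (-(lam b c))
    have e2 := congrArg (fun z => lam z y) e
    simp only [lam_circ] at e2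
    rw [tB b hb _ (hB _ _ hy), tB _ (hB _ _ hm) y hy] at e2
    exact e2.symm
  have hnegC : ∀ c ∈ C, ∀ y, lam c (lam (-c) y) = y := by
    intro c hc y
    rw [← lam_circ, ← hCtriv c hc _ (C.neg_mem hc)]; simp [lam_id]
  let K : AddSubgroup A :=
    { carrier := {k | k ∈ C ∧ (∀ y ∈ B, lam k y = y) ∧ ∀ y ∈ B, k + y = y + k}
      zero_mem' := ⟨C.zero_mem, fun y _ => lam_id y, fun y _ => by simp⟩
      add_mem' := by
        rintro a b ⟨ha, ha1, ha2⟩ ⟨hb, hb1, hb2⟩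
        refine ⟨C.add_mem ha hb, fun y hy => ?_, fun y hy => ?_⟩
        · rw [hCtriv a ha b hb, lam_circ, hb1 y hy, ha1 y hy]
        · rw [add_assoc, hb2 y hy, ← add_assoc, ha2 y hy, add_assoc]
      neg_mem' := by
        rintro a ⟨ha, ha1, ha2⟩
        refine ⟨C.neg_mem ha, fun y hy => ?_, fun y hy => ?_⟩
        · have := hnegC a ha y
          rwa [ha1 _ (hB _ _ hy)] at this
        · exact (AddCommute.neg_left (ha2 y hy : AddCommute a y)).eq }
  have hK : ∀ b ∈ B, ∀ c ∈ C, lam b c - c ∈ K := by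
    intro b hb c hc
    refine ⟨C.sub_mem (hC _ _ hc) hc, fun y hy => ?_, fun y hy => ?_⟩
    · rw [sub_eq_add_neg, hCtriv _ (hC _ _ hc) _ (C.neg_mem hc), lam_circ,
        key b hb c hc _ (hB _ _ hy), hnegC c hc]
    · have hm : -c + y + c ∈ B := by simpa using hBn.conj_mem y hy (-c)
      have e := tB b hb _ hm
      rw [lam_add, lam_add, lam_neg, tB b hb y hy] at e
      generalize lam b c = x at e
      have e3 : y + x = x + (-c + y + c) := by rw [← e]; simp [add_assoc]
      rw [sub_eq_add_neg, ← add_assoc, e3]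
      simp [add_assoc]
  have h2 : rseriesOf (bstar (A := A)) 1 ≤ B ⊔ K := by
    rw [rseriesOf, AddSubgroup.closure_le]
    rintro z ⟨a, -, x, rfl⟩
    obtain ⟨b, hb, c, hc, rfl⟩ := hfact a
    obtain ⟨b', hb', c', hc', rfl⟩ := hfact x
    have e : lam (b + c) c' = lam b c' := by
      rw [add_eq_circ, lam_circ, tC _ (hC _ _ hc) c' hc']
    have e2 : bstar (b + c) (b' + c') = lam (b + c) b' + (lam b c' - c') + -b' := by
      simp [bstar, lam_add, e, sub_eq_add_neg, add_assoc]
    rw [e2]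
    refine add_mem (add_mem ?_ ?_) ?_
    · exact (le_sup_left : B ≤ B ⊔ K) (hB _ _ hb')
    · exact (le_sup_right : K ≤ B ⊔ K) (hK b hb c' hc')
    · exact (le_sup_left : B ≤ B ⊔ K) (B.neg_mem hb')
  have h3 : rseriesOf (bstar (A := A)) 2 ≤ K := by
    rw [rseriesOf, AddSubgroup.closure_le]
    rintro z ⟨u, hu, x, rfl⟩
    have hu' := h2 hu
    rw [← SetLike.mem_coe, AddSubgroup.normal_add] at hu'
    obtain ⟨b, hb, k, hk, rfl⟩ := Set.mem_add.1 hu'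
    obtain ⟨b', hb', c', hc', rfl⟩ := hfact x
    have hk1 : lam (cinv b) k ∈ C := hC _ _ hk.1
    have e : lam (b + k) c' = lam b c' := by
      rw [add_eq_circ, lam_circ, tC _ hk1 c' hc']
    have e1 : lam (b + k) b' = b' := by
      have := key b hb _ hk1 b' hb'
      rw [lam_cinv, hk.2.1 b' hb'] at this
      rw [add_eq_circ, lam_circ, ← this, tB b hb b' hb']
    have hk2 := hK b hb c' hc'
    have e2 : bstar (b + k) (b' + c') = lam b c' - c' := by
      have : bstar (b + k) (b' + c') = b' + (lam b c' - c') + -b' := by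
        simp [bstar, lam_add, e, e1, sub_eq_add_neg, add_assoc]
      rw [this, ← hk2.2.2 b' hb']; simp [add_assoc]
    rw [e2]
    exact hk2
  rw [eq_bot_iff, rseriesOf, AddSubgroup.closure_le]
  rintro z ⟨u, hu, x, rfl⟩
  obtain ⟨hu0, hu1, -⟩ := h3 hu
  obtain ⟨b', hb', c', hc', rfl⟩ := hfact x
  simp [bstar, lam_add, hu1 b' hb', tC u hu0 c' hc']
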